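/- A density matrix ρ on ℂ² ⊗ ℂ² is separable if and only if its partial transpose ρ^{T₂} is positive semidefinite (the Peres–Horodecki positive-partial-transpose criterion: in 2⊗2 dimensions, positivity of the partial transpose is necessary and sufficient for separability). -/

import Mathlib

open scoped ComplexOrder Kronecker

noncomputable section

/-- A density matrix: positive semidefinite with trace one. -/
def IsDensity {ι : Type*} [Fintype ι] (ρ : Matrix ι ι ℂ) : Prop :=
  ρ.PosSemidef ∧ ρ.trace = 1

/-- A separable state: a finite convex combination of tensor products of density
matrices; a non-separable density matrix is entangled. -/
def Separable {m n : ℕ} (ρ : Matrix (Fin m × Fin n) (Fin m × Fin n) ℂ) : Prop :=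
  ∃ (k : ℕ) (lam : Fin k → ℝ) (ρ1 : Fin k → Matrix (Fin m) (Fin m) ℂ)
    (ρ2 : Fin k → Matrix (Fin n) (Fin n) ℂ),
    (∀ i, 0 ≤ lam i) ∧ (∑ i, lam i = 1) ∧
    (∀ i, IsDensity (ρ1 i)) ∧ (∀ i, IsDensity (ρ2 i)) ∧
    ρ = ∑ i, (lam i : ℂ) • (ρ1 i ⊗ₖ ρ2 i)

/-- The partial transpose on the second tensor factor:
`(ρ^{T₂})_{(i,k),(j,l)} = ρ_{(i,l),(j,k)}`. -/
def ptranspose2 {m n : ℕ} (ρ : Matrix (Fin m × Fin n) (Fin m × Fin n) ℂ) :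
    Matrix (Fin m × Fin n) (Fin m × Fin n) ℂ :=
  Matrix.of fun p q => ρ (p.1, q.2) (q.1, p.2)

/-!
Write `ρ` in blocks `[[A, B], [Bᴴ, C]]` over the first qubit; up to a transposition the partial
transpose exchanges `B` and `Bᴴ`. If `A = vvᴴ` has rank at most one, the two positivity conditions
force `B` to be a multiple of `A`, and `ρ` is visibly separable. Otherwise a congruence on the
second qubit normalises `A = 1`, and the conditions read `XᴴX ≤ Y` and `XXᴴ ≤ Y` for the blocks
`[[1, X], [Xᴴ, Y]]`. Every `2 × 2` matrix is unitarily similar to a symmetric one (diagonalise its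
real part, then adjust a phase), so `X` may be taken symmetric, in which case `XXᴴ` is the transpose
of `XᴴX` and there is a symmetric `Z` with `XᴴX ≤ Z ≤ Y`. Replacing `Y` by `Z` removes the product
term `|1⟩⟨1| ⊗ (Y - Z)` and leaves a matrix invariant under transposing the second qubit. After
exchanging the qubits its off-diagonal block is therefore Hermitian, and diagonalising that block
writes the matrix as a sum of products.
-/

section SeparableCone

open Matrix

variable {ι κ : Type*} [Fintype ι] [Fintype κ]

/-- The convex cone spanned by the product states, that is, the separable states without the
normalisation of the trace. -/
def separableCone (ι κ : Type*) [Fintype ι] [Fintype κ] :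
    PointedCone ℝ (Matrix (ι × κ) (ι × κ) ℂ) :=
  PointedCone.hull ℝ {ρ | ∃ D E, IsDensity D ∧ IsDensity E ∧ ρ = D ⊗ₖ E}

lemma exists_isDensity_eq_smul {P : Matrix ι ι ℂ} (hP : P.PosSemidef) (hP0 : P ≠ 0) :
    ∃ (t : ℝ) (D : Matrix ι ι ℂ), 0 ≤ t ∧ IsDensity D ∧ P = t • D := by
  obtain ⟨t, ht, htr⟩ := RCLike.nonneg_iff_exists_ofReal.1 hP.trace_nonneg
  have ht0 : t ≠ 0 := by
    rintro rfl
    exact hP0 (hP.trace_eq_zero_iff.1 (by simp [← htr]))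
  refine ⟨t, t⁻¹ • P, ht, ⟨hP.smul (inv_nonneg.2 ht), ?_⟩, (smul_inv_smul₀ ht0 P).symm⟩
  rw [trace_smul, ← htr, RCLike.real_smul_eq_coe_mul, ← RCLike.ofReal_mul, inv_mul_cancel₀ ht0,
    RCLike.ofReal_one]

lemma kronecker_mem_separableCone {P : Matrix ι ι ℂ} {Q : Matrix κ κ ℂ} (hP : P.PosSemidef)
    (hQ : Q.PosSemidef) : P ⊗ₖ Q ∈ separableCone ι κ := by
  rcases eq_or_ne P 0 with rfl | hP0
  · simp
  rcases eq_or_ne Q 0 with rfl | hQ0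
  · simp
  obtain ⟨s, D, hs, hD, rfl⟩ := exists_isDensity_eq_smul hP hP0
  obtain ⟨t, E, ht, hE, rfl⟩ := exists_isDensity_eq_smul hQ hQ0
  rw [smul_kronecker, kronecker_smul, smul_smul]
  exact PointedCone.smul_mem _ (mul_nonneg hs ht) (PointedCone.subset_hull ⟨D, E, hD, hE, rfl⟩)

lemma map_mem_separableCone {ι' κ' : Type*} [Fintype ι'] [Fintype κ']
    (f : Matrix (ι × κ) (ι × κ) ℂ →ₗ[ℝ] Matrix (ι' × κ') (ι' × κ') ℂ)
    (hf : ∀ P Q, P.PosSemidef → Q.PosSemidef → f (P ⊗ₖ Q) ∈ separableCone ι' κ')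
    {ρ : Matrix (ι × κ) (ι × κ) ℂ} (hρ : ρ ∈ separableCone ι κ) : f ρ ∈ separableCone ι' κ' := by
  suffices h : separableCone ι κ ≤ (separableCone ι' κ').comap f from h hρ
  refine Submodule.span_le.2 ?_
  rintro _ ⟨D, E, hD, hE, rfl⟩
  exact hf D E hD.1 hE.1

lemma kronecker_conj_mem_separableCone (S : Matrix ι ι ℂ) (T : Matrix κ κ ℂ)
    {ρ : Matrix (ι × κ) (ι × κ) ℂ} (hρ : ρ ∈ separableCone ι κ) :
    (S ⊗ₖ T) * ρ * (S ⊗ₖ T)ᴴ ∈ separableCone ι κ := by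
  refine map_mem_separableCone (LinearMap.mulLeftRight ℝ (S ⊗ₖ T, (S ⊗ₖ T)ᴴ))
    (fun P Q hP hQ => ?_) hρ
  rw [LinearMap.mulLeftRight_apply, conjTranspose_kronecker, ← mul_kronecker_mul,
    ← mul_kronecker_mul]
  exact kronecker_mem_separableCone (hP.mul_mul_conjTranspose_same S)
    (hQ.mul_mul_conjTranspose_same T)

lemma submatrix_swap_mem_separableCone {ρ : Matrix (ι × κ) (ι × κ) ℂ}
    (hρ : ρ ∈ separableCone ι κ) : ρ.submatrix Prod.swap Prod.swap ∈ separableCone κ ι := by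
  refine map_mem_separableCone (reindexLinearEquiv ℝ ℂ (.prodComm ι κ) (.prodComm ι κ)).toLinearMap
    (fun P Q hP hQ => ?_) hρ
  convert kronecker_mem_separableCone hQ hP using 1
  ext p q
  exact mul_comm _ _

lemma separable_of_mem_separableCone {m n : ℕ} {ρ : Matrix (Fin m × Fin n) (Fin m × Fin n) ℂ}
    (hρ : ρ ∈ separableCone (Fin m) (Fin n)) (htr : ρ.trace = 1) : Separable ρ := by
  obtain ⟨k, lam, σ, rfl⟩ := Submodule.mem_span_set'.1 hρ
  choose D E hD hE hσ using fun i => (σ i).2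
  have hsum : ∑ i, lam i • (σ i : Matrix (Fin m × Fin n) (Fin m × Fin n) ℂ) =
      ∑ i, ((lam i : ℝ) : ℂ) • (D i ⊗ₖ E i) :=
    Finset.sum_congr rfl fun i _ => by rw [hσ, Complex.coe_smul]; rfl
  refine ⟨k, fun i => lam i, D, E, fun i => (lam i).2, ?_, hD, hE, hsum⟩
  rw [hsum] at htr
  simpa [trace_sum, trace_smul, trace_kronecker, (hD _).2, (hE _).2, ← Complex.ofReal_sum,
    -Complex.coe_smul] using htr

lemma Separable.posSemidef_ptranspose2 {m n : ℕ} {ρ : Matrix (Fin m × Fin n) (Fin m × Fin n) ℂ}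
    (hρ : Separable ρ) : (ptranspose2 ρ).PosSemidef := by
  obtain ⟨k, lam, D, E, hlam, -, hD, hE, rfl⟩ := hρ
  have hsum : ptranspose2 (∑ i, (lam i : ℂ) • (D i ⊗ₖ E i)) =
      ∑ i, (lam i : ℂ) • (D i ⊗ₖ (E i)ᵀ) := by
    ext p q
    simp [ptranspose2, Matrix.sum_apply]
  rw [hsum]
  exact posSemidef_sum _ fun i _ =>
    ((hD i).1.kronecker (hE i).1.transpose).smul (Complex.zero_le_real.2 (hlam i))

end SeparableCone

section HermBlock

open Matrix

variable {ι κ : Type*}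

/-- The operator on `ℂ² ⊗ ℂ^κ` whose blocks with respect to the first factor are `A`, `B`, `Bᴴ`
and `C`. Every Hermitian operator has this form, and its partial transpose is, up to a
transposition, the same operator with `B` replaced by `Bᴴ`. -/
def hermBlock (A B C : Matrix κ κ ℂ) : Matrix (Fin 2 × κ) (Fin 2 × κ) ℂ :=
  comp (Fin 2) (Fin 2) κ κ ℂ !![A, B; Bᴴ, C]

lemma hermBlock_add (A B C A' B' C' : Matrix κ κ ℂ) :
    hermBlock A B C + hermBlock A' B' C' = hermBlock (A + A') (B + B') (C + C') := by
  ext ⟨i, k⟩ ⟨j, l⟩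
  fin_cases i <;> fin_cases j <;> simp [hermBlock]

lemma sum_hermBlock (s : Finset ι) (A B C : ι → Matrix κ κ ℂ) :
    ∑ k ∈ s, hermBlock (A k) (B k) (C k) =
      hermBlock (∑ k ∈ s, A k) (∑ k ∈ s, B k) (∑ k ∈ s, C k) := by
  ext ⟨i, k⟩ ⟨j, l⟩
  fin_cases i <;> fin_cases j <;>
    simp [hermBlock, Matrix.sum_apply]

lemma exists_hermBlock_eq {ρ : Matrix (Fin 2 × κ) (Fin 2 × κ) ℂ} (hρ : ρ.IsHermitian) :
    ∃ A B C, ρ = hermBlock A B C := by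
  refine ⟨of fun k l => ρ (0, k) (0, l), of fun k l => ρ (0, k) (1, l),
    of fun k l => ρ (1, k) (1, l), ?_⟩
  ext ⟨i, k⟩ ⟨j, l⟩
  fin_cases i <;> fin_cases j <;> simp [hermBlock, hρ.apply]

lemma transpose_ptranspose2_hermBlock {n : ℕ} (A B C : Matrix (Fin n) (Fin n) ℂ) :
    (ptranspose2 (hermBlock A B C))ᵀ = hermBlock A Bᴴ C := by
  ext ⟨i, k⟩ ⟨j, l⟩
  fin_cases i <;> fin_cases j <;> simp [hermBlock, ptranspose2]

lemma hermBlock_smul_eq_kronecker {P : Matrix κ κ ℂ} (hP : P.IsHermitian) (x : ℂ) :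
    hermBlock P (x • P) (‖x‖ ^ 2 • P) =
      vecMulVec ![1, star x] (star ![1, star x]) ⊗ₖ P := by
  have hstar : star ![1, star x] = ![1, x] := by
    ext i
    fin_cases i <;> simp
  rw [hstar]
  ext ⟨i, k⟩ ⟨j, l⟩
  fin_cases i <;> fin_cases j <;> simp [hermBlock, hP.apply, Complex.conj_mul']

lemma hermBlock_zero_zero_eq_kronecker (C : Matrix κ κ ℂ) :
    hermBlock 0 0 C = single 1 1 1 ⊗ₖ C := by
  ext ⟨i, k⟩ ⟨j, l⟩
  fin_cases i <;> fin_cases j <;> simp [hermBlock]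

lemma posSemidef_hermBlock_iff_fromBlocks {A B C : Matrix κ κ ℂ} :
    (hermBlock A B C).PosSemidef ↔ (fromBlocks A B Bᴴ C).PosSemidef := by
  let e : Fin 2 × κ ≃ κ ⊕ κ := (finTwoEquiv.prodCongr (.refl κ)).trans (.boolProdEquivSum κ)
  rw [← posSemidef_submatrix_equiv e]
  congr! 1
  ext ⟨i, k⟩ ⟨j, l⟩
  fin_cases i <;> fin_cases j <;> simp [hermBlock, e, finTwoEquiv]

lemma posSemidef_of_posSemidef_hermBlock {A B C : Matrix κ κ ℂ}
    (h : (hermBlock A B C).PosSemidef) : A.PosSemidef :=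
  h.submatrix fun k => (0, k)

variable [Fintype κ]

lemma posSemidef_compression_of_hermBlock {A B C : Matrix κ κ ℂ} (h : (hermBlock A B C).PosSemidef)
    (S T : Matrix κ κ ℂ) :
    (S * A * Sᴴ + T * Bᴴ * Sᴴ + (S * B * Tᴴ + T * C * Tᴴ)).PosSemidef := by
  have := (posSemidef_hermBlock_iff_fromBlocks.1 h).mul_mul_conjTranspose_same (fromCols S T)
  rwa [fromCols_mul_fromBlocks, conjTranspose_fromCols_eq_fromRows_conjTranspose,
    fromCols_mul_fromRows, Matrix.add_mul, Matrix.add_mul] at this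

open scoped MatrixOrder in
lemma exists_eq_conjTranspose_mul_self {A : Matrix κ κ ℂ} (hA : A.PosSemidef) :
    ∃ N : Matrix κ κ ℂ, A = Nᴴ * N := by
  classical
  exact CStarAlgebra.nonneg_iff_eq_star_mul_self.1 hA.nonneg

lemma conjTranspose_mul_eq_zero_of_posSemidef_hermBlock {A B C P : Matrix κ κ ℂ}
    (h : (hermBlock A B C).PosSemidef) (hAP : A * P = 0) : Bᴴ * P = 0 := by
  obtain ⟨N, hN⟩ := exists_eq_conjTranspose_mul_self (posSemidef_hermBlock_iff_fromBlocks.1 h)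
  have hcol : fromBlocks A B Bᴴ C * fromRows P (0 : Matrix κ κ ℂ) = fromRows 0 (Bᴴ * P) := by
    rw [fromBlocks_mul_fromRows, hAP, Matrix.mul_zero, Matrix.mul_zero, add_zero, add_zero]
  have hNP : N * fromRows P (0 : Matrix κ κ ℂ) = 0 := by
    rw [← conjTranspose_mul_self_eq_zero, conjTranspose_mul, Matrix.mul_assoc,
      ← Matrix.mul_assoc Nᴴ, ← hN, hcol, conjTranspose_fromRows_eq_fromCols_conjTranspose,
      fromCols_mul_fromRows, Matrix.mul_zero, conjTranspose_zero, Matrix.zero_mul, add_zero]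
  rw [hN, Matrix.mul_assoc, hNP, Matrix.mul_zero, ← fromRows_zero] at hcol
  exact (fromRows_inj hcol).2.symm

lemma one_kronecker_conj_hermBlock (S A B C : Matrix κ κ ℂ) :
    ((1 : Matrix (Fin 2) (Fin 2) ℂ) ⊗ₖ S) * hermBlock A B C * (1 ⊗ₖ S)ᴴ =
      hermBlock (S * A * Sᴴ) (S * B * Sᴴ) (S * C * Sᴴ) := by
  classical
  have hone (T : Matrix κ κ ℂ) : (1 : Matrix (Fin 2) (Fin 2) ℂ) ⊗ₖ T =
      compRingEquiv (Fin 2) κ ℂ !![T, 0; 0, T] := by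
    ext ⟨i, k⟩ ⟨j, l⟩
    fin_cases i <;> fin_cases j <;> simp
  have hblock (A B C : Matrix κ κ ℂ) :
      hermBlock A B C = compRingEquiv (Fin 2) κ ℂ !![A, B; Bᴴ, C] := rfl
  rw [conjTranspose_kronecker, conjTranspose_one, hone, hone, hblock, hblock, ← map_mul,
    ← map_mul, mul_fin_two, mul_fin_two]
  simp [conjTranspose_mul, Matrix.mul_assoc]

variable [DecidableEq κ]

lemma posSemidef_hermBlock_one_iff {X Y : Matrix κ κ ℂ} :
    (hermBlock 1 X Y).PosSemidef ↔ (Y - Xᴴ * X).PosSemidef := by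
  let : Invertible (1 : Matrix κ κ ℂ) := invertibleOne
  rw [posSemidef_hermBlock_iff_fromBlocks, PosDef.one.fromBlocks₁₁, inv_one, Matrix.mul_one]

lemma posSemidef_hermBlock_conj_iff {S : Matrix κ κ ℂ} (hS : IsUnit S) {A B C : Matrix κ κ ℂ} :
    (hermBlock (S * A * Sᴴ) (S * B * Sᴴ) (S * C * Sᴴ)).PosSemidef ↔
      (hermBlock A B C).PosSemidef := by
  have hS' : IsUnit ((1 : Matrix (Fin 2) (Fin 2) ℂ) ⊗ₖ S) := isUnit_one.kronecker hS
  rw [← one_kronecker_conj_hermBlock]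
  exact hS'.posSemidef_star_right_conjugate_iff

end HermBlock

section Decomposition

open Matrix

variable {κ : Type*}

lemma posSemidef_single [DecidableEq κ] (k : κ) : (single k k (1 : ℂ)).PosSemidef := by
  rw [← diagonal_single]
  exact PosSemidef.diagonal (Pi.single_nonneg.2 zero_le_one)

lemma exists_eq_smul_vecMulVec_of_posSemidef_hermBlock [Finite κ] {v : κ → ℂ}
    {B C : Matrix κ κ ℂ}
    (h : (hermBlock (vecMulVec v (star v)) B C).PosSemidef)
    (h' : (hermBlock (vecMulVec v (star v)) Bᴴ C).PosSemidef) :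
    ∃ x : ℂ, B = x • vecMulVec v (star v) := by
  classical
  cases nonempty_fintype κ
  set A := vecMulVec v (star v) with hA
  set n := star v ⬝ᵥ v with hn
  have hAP : A * (1 - n⁻¹ • A) = 0 := by
    rcases eq_or_ne v 0 with rfl | hv
    · simp [hA]
    · have hn0 : n ≠ 0 := mt dotProduct_star_self_eq_zero.1 hv
      rw [Matrix.mul_sub, Matrix.mul_smul, Matrix.mul_one, hA, vecMulVec_mul_vecMulVec,
        vecMulVec_smul, ← hn, inv_smul_smul₀ hn0, sub_self]
  have hBA : B = n⁻¹ • (B * A) := by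
    have := conjTranspose_mul_eq_zero_of_posSemidef_hermBlock h' hAP
    rwa [conjTranspose_conjTranspose, Matrix.mul_sub, Matrix.mul_one, sub_eq_zero,
      Matrix.mul_smul] at this
  have hAB : B = star n⁻¹ • (A * B) := by
    have := conjTranspose_mul_eq_zero_of_posSemidef_hermBlock h hAP
    rw [Matrix.mul_sub, Matrix.mul_one, sub_eq_zero, Matrix.mul_smul] at this
    simpa [hA, conjTranspose_vecMulVec] using congr_arg conjTranspose this
  refine ⟨star n⁻¹ * n⁻¹ * (star v ⬝ᵥ B *ᵥ v), ?_⟩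
  calc B = star n⁻¹ • (A * n⁻¹ • (B * A)) := by rw [← hBA, ← hAB]
    _ = _ := by
      rw [hA, Matrix.mul_smul, mul_vecMulVec, vecMulVec_mul_vecMulVec, vecMulVec_smul, smul_smul,
        smul_smul]

variable [Fintype κ]

lemma hermBlock_mem_separableCone_of_sub {A B C C' : Matrix κ κ ℂ}
    (h : hermBlock A B C ∈ separableCone (Fin 2) κ) (hC : (C' - C).PosSemidef) :
    hermBlock A B C' ∈ separableCone (Fin 2) κ := by
  have hcorner : hermBlock 0 0 (C' - C) ∈ separableCone (Fin 2) κ := by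
    rw [hermBlock_zero_zero_eq_kronecker]
    exact kronecker_mem_separableCone (posSemidef_single 1) hC
  simpa [hermBlock_add] using add_mem h hcorner

lemma hermBlock_smul_mem_separableCone {P C : Matrix κ κ ℂ} {x : ℂ} (hP : P.PosSemidef)
    (hC : (C - ‖x‖ ^ 2 • P).PosSemidef) : hermBlock P (x • P) C ∈ separableCone (Fin 2) κ := by
  refine hermBlock_mem_separableCone_of_sub ?_ hC
  rw [hermBlock_smul_eq_kronecker hP.isHermitian]
  exact kronecker_mem_separableCone (posSemidef_vecMulVec_self_star _) hP

lemma hermBlock_conj_mem_separableCone (S : Matrix κ κ ℂ) {A B C : Matrix κ κ ℂ}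
    (h : hermBlock A B C ∈ separableCone (Fin 2) κ) :
    hermBlock (S * A * Sᴴ) (S * B * Sᴴ) (S * C * Sᴴ) ∈ separableCone (Fin 2) κ :=
  one_kronecker_conj_hermBlock S A B C ▸ kronecker_conj_mem_separableCone 1 S h

lemma hermBlock_vecMulVec_mem_separableCone {v : κ → ℂ} {B C : Matrix κ κ ℂ}
    (h : (hermBlock (vecMulVec v (star v)) B C).PosSemidef)
    (h' : (hermBlock (vecMulVec v (star v)) Bᴴ C).PosSemidef) :
    hermBlock (vecMulVec v (star v)) B C ∈ separableCone (Fin 2) κ := by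
  classical
  obtain ⟨x, rfl⟩ := exists_eq_smul_vecMulVec_of_posSemidef_hermBlock h h'
  refine hermBlock_smul_mem_separableCone (posSemidef_vecMulVec_self_star v) ?_
  convert posSemidef_compression_of_hermBlock h (-star x • 1) 1 using 1
  have hx : (‖x‖ ^ 2 : ℝ) • vecMulVec v (star v) = (star x * x) • vecMulVec v (star v) := by
    rw [Complex.star_def, Complex.conj_mul', ← Complex.ofReal_pow, Complex.coe_smul]
  rw [hx]
  simp only [conjTranspose_smul, conjTranspose_vecMulVec, conjTranspose_one, star_star, star_neg,
    Matrix.smul_mul, Matrix.mul_smul, Matrix.one_mul, Matrix.mul_one]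
  module

variable [DecidableEq κ]

lemma hermBlock_one_diagonal_mem_separableCone {d : κ → ℂ} {Y : Matrix κ κ ℂ}
    (h : (hermBlock 1 (diagonal d) Y).PosSemidef) :
    hermBlock 1 (diagonal d) Y ∈ separableCone (Fin 2) κ := by
  refine hermBlock_mem_separableCone_of_sub ?_ (posSemidef_hermBlock_one_iff.1 h)
  have hsum : hermBlock 1 (diagonal d) ((diagonal d)ᴴ * diagonal d) =
      ∑ k, hermBlock (single k k 1) (d k • single k k 1) (‖d k‖ ^ 2 • single k k 1) := by
    rw [sum_hermBlock]
    simp only [smul_single, smul_eq_mul, mul_one, sum_single_eq_diagonal, diagonal_one]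
    rw [diagonal_conjTranspose, diagonal_mul_diagonal]
    simp [Complex.conj_mul']
  rw [hsum]
  refine sum_mem fun k _ => hermBlock_smul_mem_separableCone ?_ ?_
  · exact posSemidef_single k
  · rw [sub_self]
    exact PosSemidef.zero

lemma exists_eq_mul_mul_conjTranspose {S : Matrix κ κ ℂ} (hS : IsUnit S) (B : Matrix κ κ ℂ) :
    ∃ X, B = S * X * Sᴴ := by
  refine ⟨S⁻¹ * B * (S⁻¹)ᴴ, ?_⟩
  have hSS : S * S⁻¹ = 1 := mul_nonsing_inv S ((isUnit_iff_isUnit_det S).1 hS)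
  have hSS' : (S⁻¹)ᴴ * Sᴴ = 1 := by rw [← conjTranspose_mul, hSS, conjTranspose_one]
  rw [← Matrix.mul_assoc, ← Matrix.mul_assoc, hSS, Matrix.one_mul, Matrix.mul_assoc, hSS',
    Matrix.mul_one]

lemma hermBlock_one_mem_separableCone_of_isHermitian {X Y : Matrix κ κ ℂ} (hX : X.IsHermitian)
    (h : (hermBlock 1 X Y).PosSemidef) : hermBlock 1 X Y ∈ separableCone (Fin 2) κ := by
  set U : Matrix κ κ ℂ := ↑hX.eigenvectorUnitary
  have hU : U * Uᴴ = 1 := Unitary.coe_mul_star_self _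
  have hUnit : IsUnit U := Unitary.isUnit_coe
  have hXU : X = U * diagonal (RCLike.ofReal ∘ hX.eigenvalues) * Uᴴ := hX.spectral_theorem
  obtain ⟨Y', rfl⟩ := exists_eq_mul_mul_conjTranspose hUnit Y
  have hone : (1 : Matrix κ κ ℂ) = U * 1 * Uᴴ := by rw [Matrix.mul_one, hU]
  rw [hXU, hone] at h ⊢
  rw [posSemidef_hermBlock_conj_iff hUnit] at h
  exact hermBlock_conj_mem_separableCone U (hermBlock_one_diagonal_mem_separableCone h)

end Decomposition

section Congruence

open Matrix

variable {κ : Type*} [Fintype κ]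

lemma conjTranspose_mul_mul_conjTranspose (S X : Matrix κ κ ℂ) :
    (S * X * Sᴴ)ᴴ = S * Xᴴ * Sᴴ := by
  simp only [conjTranspose_mul, conjTranspose_conjTranspose, Matrix.mul_assoc]

variable [DecidableEq κ]

lemma exists_eq_conj_one_of_posDef {A : Matrix κ κ ℂ} (hA : A.PosDef) (B C : Matrix κ κ ℂ) :
    ∃ S X Y : Matrix κ κ ℂ,
      IsUnit S ∧ A = S * 1 * Sᴴ ∧ B = S * X * Sᴴ ∧ C = S * Y * Sᴴ := by
  obtain ⟨N, rfl⟩ := exists_eq_conjTranspose_mul_self hA.posSemidef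
  have hN : IsUnit Nᴴ := (isUnit_of_mul_isUnit_right hA.isUnit).star
  obtain ⟨X, hX⟩ := exists_eq_mul_mul_conjTranspose hN B
  obtain ⟨Y, hY⟩ := exists_eq_mul_mul_conjTranspose hN C
  exact ⟨Nᴴ, X, Y, hN, by simp, hX, hY⟩

end Congruence

section Qubit

open Matrix ComplexConjugate

lemma exists_diagonal_eq_vecMulVec {d : Fin 2 → ℝ} (hd : ∀ i, 0 ≤ d i) (h : d 0 * d 1 = 0) :
    ∃ w : Fin 2 → ℂ, diagonal (RCLike.ofReal ∘ d) = vecMulVec w (star w) := by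
  refine ⟨fun i => √(d i), ?_⟩
  have hsqrt (i j : Fin 2) : (√(d i) : ℂ) * star (√(d j) : ℂ) = √(d i * d j) := by
    rw [RCLike.star_def, Complex.conj_ofReal, Real.sqrt_mul (hd i), Complex.ofReal_mul]
  ext i j
  rw [vecMulVec_apply, Pi.star_apply, hsqrt]
  fin_cases i <;> fin_cases j <;> simp [h, mul_comm (d 1) (d 0), hd]

lemma posDef_or_eq_vecMulVec {A : Matrix (Fin 2) (Fin 2) ℂ} (hA : A.PosSemidef) :
    A.PosDef ∨ ∃ v, A = vecMulVec v (star v) := by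
  refine or_iff_not_imp_left.2 fun hdet => ?_
  have hA' := hA.isHermitian
  rw [hA.posDef_iff_det_ne_zero, not_not, hA'.det_eq_prod_eigenvalues, Fin.prod_univ_two] at hdet
  obtain ⟨w, hw⟩ := exists_diagonal_eq_vecMulVec hA.eigenvalues_nonneg
    (Complex.ofReal_eq_zero.1 ((Complex.ofReal_mul _ _).trans hdet))
  refine ⟨hA'.eigenvectorUnitary *ᵥ w, hA'.spectral_theorem.trans ?_⟩
  rw [Unitary.conjStarAlgAut_apply, hw, mul_vecMulVec, vecMulVec_mul, star_mulVec]
  rfl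

lemma hermBlock_mem_separableCone_of_isHermitian {A B C : Matrix (Fin 2) (Fin 2) ℂ}
    (hB : B.IsHermitian) (h : (hermBlock A B C).PosSemidef) :
    hermBlock A B C ∈ separableCone (Fin 2) (Fin 2) := by
  rcases posDef_or_eq_vecMulVec (posSemidef_of_posSemidef_hermBlock h) with hA | ⟨v, rfl⟩
  · obtain ⟨S, X, Y, hS, rfl, rfl, rfl⟩ := exists_eq_conj_one_of_posDef hA B C
    have hX : X.IsHermitian := by
      have hconj := (conjTranspose_mul_mul_conjTranspose S X).symm.trans hB.eq
      exact hS.mul_left_cancel (hS.star.mul_right_cancel hconj)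
    exact hermBlock_conj_mem_separableCone S (hermBlock_one_mem_separableCone_of_isHermitian hX
      ((posSemidef_hermBlock_conj_iff hS).1 h))
  · exact hermBlock_vecMulVec_mem_separableCone h (hB.eq.symm ▸ h)

lemma submatrix_swap_hermBlock {A B C : Matrix (Fin 2) (Fin 2) ℂ} (hA : A.IsHermitian)
    (hB : B.IsSymm) (hC : C.IsHermitian) :
    (hermBlock A B C).submatrix Prod.swap Prod.swap =
      hermBlock !![A 0 0, B 0 0; conj (B 0 0), C 0 0] !![A 0 1, B 0 1; conj (B 0 1), C 0 1]
        !![A 1 1, B 1 1; conj (B 1 1), C 1 1] := by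
  ext ⟨i, k⟩ ⟨j, l⟩
  fin_cases i <;> fin_cases j <;> fin_cases k <;> fin_cases l <;>
    simp [hermBlock, hA.apply, hC.apply, hB.apply 0 1]

lemma isSymm_of_im_eq_zero {A : Matrix (Fin 2) (Fin 2) ℂ} (hA : A.IsHermitian)
    (h : (A 0 1).im = 0) : A.IsSymm := by
  ext i j
  fin_cases i <;> fin_cases j <;> simp [← hA.apply 1 0, Complex.conj_eq_iff_im.2 h]

lemma exists_isSymm_between_of_im_mul_im_nonpos {P Y : Matrix (Fin 2) (Fin 2) ℂ}
    (hP : P.IsHermitian) (hPY : (Y - P).PosSemidef) (him : (P 0 1).im * (Y 0 1).im ≤ 0) :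
    ∃ Z : Matrix (Fin 2) (Fin 2) ℂ, Z.IsSymm ∧ (Z - P).PosSemidef ∧ (Y - Z).PosSemidef := by
  have hY : Y.IsHermitian := by simpa using hPY.isHermitian.add hP
  set a := (P 0 1).im
  set b := (Y 0 1).im
  -- `Z` is the point of the segment from `P` to `Y` whose off-diagonal entry is real.
  obtain ⟨l, hl0, hl1, hl⟩ : ∃ l : ℝ, 0 ≤ l ∧ l ≤ 1 ∧ (1 - l) * a + l * b = 0 := by
    have hzero : (0 : ℝ) ∈ segment ℝ a b := by
      rw [segment_eq_uIcc, Set.mem_uIcc, and_comm (a := b ≤ 0)]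
      exact (mul_nonpos_iff.1 him).symm
    rw [segment_eq_image] at hzero
    obtain ⟨l, ⟨hl0, hl1⟩, hl⟩ := hzero
    exact ⟨l, hl0, hl1, hl⟩
  refine ⟨(1 - l) • P + l • Y, isSymm_of_im_eq_zero ?_ ?_, ?_, ?_⟩
  · exact (hP.smul (.all _)).add (hY.smul (.all _))
  · simpa using hl
  · convert hPY.smul hl0 using 1
    module
  · convert hPY.smul (sub_nonneg.2 hl1) using 1
    module

lemma exists_isSymm_between {P Y : Matrix (Fin 2) (Fin 2) ℂ} (hP : P.IsHermitian)
    (hPY : (Y - P).PosSemidef) (hPY' : (Y - Pᵀ).PosSemidef) :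
    ∃ Z : Matrix (Fin 2) (Fin 2) ℂ, Z.IsSymm ∧ (Z - P).PosSemidef ∧ (Y - Z).PosSemidef := by
  rcases le_total ((P 0 1).im * (Y 0 1).im) 0 with him | him
  · exact exists_isSymm_between_of_im_mul_im_nonpos hP hPY him
  · have him' : (Pᵀ 0 1).im * (Y 0 1).im ≤ 0 := by
      rw [transpose_apply, ← hP.apply 1 0, RCLike.star_def, Complex.conj_im]
      linarith
    obtain ⟨Z, hZ, hPZ, hZY⟩ :=
      exists_isSymm_between_of_im_mul_im_nonpos hP.transpose hPY' him'
    refine ⟨Z, hZ, ?_, hZY⟩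
    simpa [hZ.eq] using hPZ.transpose

lemma hermBlock_one_mem_separableCone_of_isSymm {X Z : Matrix (Fin 2) (Fin 2) ℂ} (hX : X.IsSymm)
    (hZ : Z.IsSymm) (h : (hermBlock 1 X Z).PosSemidef) :
    hermBlock 1 X Z ∈ separableCone (Fin 2) (Fin 2) := by
  have hZ' : Z.IsHermitian := by
    simpa using (posSemidef_hermBlock_one_iff.1 h).isHermitian.add
      (isHermitian_conjTranspose_mul_self X)
  have hswap := submatrix_swap_hermBlock isHermitian_one hX hZ'
  have hB : !![(1 : Matrix (Fin 2) (Fin 2) ℂ) 0 1, X 0 1; conj (X 0 1), Z 0 1].IsHermitian := by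
    have hZ01 : conj (Z 0 1) = Z 0 1 := (hZ'.apply 1 0).trans (hZ.apply 0 1)
    ext i j
    fin_cases i <;> fin_cases j <;> simp [hZ01]
  have hmem := hermBlock_mem_separableCone_of_isHermitian hB (hswap ▸ h.submatrix Prod.swap)
  rw [← hswap] at hmem
  exact submatrix_swap_mem_separableCone hmem

lemma exists_unitary_diagonal_conj_isSymm {K : Matrix (Fin 2) (Fin 2) ℂ} (hK : K.IsHermitian) :
    ∃ d : Fin 2 → ℂ, (diagonal d)ᴴ * diagonal d = 1 ∧
      ((diagonal d)ᴴ * K * diagonal d).IsSymm := by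
  obtain ⟨c, hc, hcK⟩ := Complex.exists_norm_eq_mul_self (K 0 1)
  have hcc : conj c * c = 1 := by rw [Complex.conj_mul', hc, Complex.ofReal_one, one_pow]
  refine ⟨![1, c], ?_, isSymm_of_im_eq_zero (isHermitian_conjTranspose_mul_mul _ hK) ?_⟩
  · rw [diagonal_conjTranspose, diagonal_mul_diagonal, diagonal_eq_one]
    ext i
    fin_cases i <;> simp [hcc]
  · rw [diagonal_conjTranspose, mul_diagonal, diagonal_mul]
    simp [mul_comm (K 0 1), ← hcK]

open ComplexStarModule in
lemma exists_unitary_conj_isSymm (X : Matrix (Fin 2) (Fin 2) ℂ) :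
    ∃ U X' : Matrix (Fin 2) (Fin 2) ℂ, U * Uᴴ = 1 ∧ X'.IsSymm ∧ X = U * X' * Uᴴ := by
  obtain ⟨H, K, hH, hK, rfl⟩ : ∃ H K : Matrix (Fin 2) (Fin 2) ℂ,
      H.IsHermitian ∧ K.IsHermitian ∧ H + Complex.I • K = X :=
    ⟨ℜ X, ℑ X, (ℜ X).2, (ℑ X).2, realPart_add_I_smul_imaginaryPart X⟩
  set V : Matrix (Fin 2) (Fin 2) ℂ := ↑hH.eigenvectorUnitary
  have hV : V * Vᴴ = 1 := Unitary.coe_mul_star_self _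
  have hHV : Vᴴ * H * V = diagonal (RCLike.ofReal ∘ hH.eigenvalues) :=
    (Unitary.conjStarAlgAut_star_apply (S := ℂ) _ H).symm.trans
      hH.conjStarAlgAut_star_eigenvectorUnitary
  obtain ⟨d, hd, hdK⟩ :=
    exists_unitary_diagonal_conj_isSymm (isHermitian_conjTranspose_mul_mul V hK)
  obtain ⟨U, hUV⟩ : ∃ U, U = V * diagonal d := ⟨_, rfl⟩
  have hU : U * Uᴴ = 1 := by
    rw [hUV, conjTranspose_mul, Matrix.mul_assoc, ← Matrix.mul_assoc (diagonal d),
      mul_eq_one_comm.1 hd, Matrix.one_mul, hV]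
  refine ⟨U, Uᴴ * (H + Complex.I • K) * U, hU, ?_, ?_⟩
  · have hX' : Uᴴ * (H + Complex.I • K) * U =
        (diagonal d)ᴴ * (Vᴴ * H * V) * diagonal d +
          Complex.I • ((diagonal d)ᴴ * (Vᴴ * K * V) * diagonal d) := by
      simp only [hUV, conjTranspose_mul, Matrix.mul_add, Matrix.add_mul, Matrix.mul_smul,
        Matrix.smul_mul, Matrix.mul_assoc]
    rw [hX', hHV, diagonal_conjTranspose, diagonal_mul_diagonal, diagonal_mul_diagonal,
      ← diagonal_conjTranspose]
    exact (isSymm_diagonal _).add (hdK.smul _)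
  · rw [← Matrix.mul_assoc, ← Matrix.mul_assoc, hU, Matrix.one_mul, Matrix.mul_assoc, hU,
      Matrix.mul_one]

lemma hermBlock_one_mem_separableCone {X Y : Matrix (Fin 2) (Fin 2) ℂ}
    (h : (hermBlock 1 X Y).PosSemidef) (h' : (hermBlock 1 Xᴴ Y).PosSemidef) :
    hermBlock 1 X Y ∈ separableCone (Fin 2) (Fin 2) := by
  obtain ⟨U, X, hU, hX, rfl⟩ := exists_unitary_conj_isSymm X
  have hUnit : IsUnit U := IsUnit.of_mul_eq_one _ hU
  obtain ⟨Y, rfl⟩ := exists_eq_mul_mul_conjTranspose hUnit Y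
  have hone : (1 : Matrix (Fin 2) (Fin 2) ℂ) = U * 1 * Uᴴ := by rw [Matrix.mul_one, hU]
  rw [hone] at h h' ⊢
  rw [conjTranspose_mul_mul_conjTranspose] at h'
  refine hermBlock_conj_mem_separableCone U ?_
  rw [posSemidef_hermBlock_conj_iff hUnit, posSemidef_hermBlock_one_iff] at h h'
  have hXX : (Xᴴ * X)ᵀ = Xᴴᴴ * Xᴴ := by
    rw [transpose_mul, hX.eq, hX.conjTranspose.eq, conjTranspose_conjTranspose]
  obtain ⟨Z, hZ, hXZ, hZY⟩ :=
    exists_isSymm_between (isHermitian_conjTranspose_mul_self X) h (hXX ▸ h')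
  exact hermBlock_mem_separableCone_of_sub
    (hermBlock_one_mem_separableCone_of_isSymm hX hZ (posSemidef_hermBlock_one_iff.2 hXZ)) hZY

lemma hermBlock_mem_separableCone {A B C : Matrix (Fin 2) (Fin 2) ℂ}
    (h : (hermBlock A B C).PosSemidef) (h' : (hermBlock A Bᴴ C).PosSemidef) :
    hermBlock A B C ∈ separableCone (Fin 2) (Fin 2) := by
  rcases posDef_or_eq_vecMulVec (posSemidef_of_posSemidef_hermBlock h) with hA | ⟨v, rfl⟩
  · obtain ⟨S, X, Y, hS, rfl, rfl, rfl⟩ := exists_eq_conj_one_of_posDef hA B C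
    rw [conjTranspose_mul_mul_conjTranspose] at h'
    exact hermBlock_conj_mem_separableCone S (hermBlock_one_mem_separableCone
      ((posSemidef_hermBlock_conj_iff hS).1 h) ((posSemidef_hermBlock_conj_iff hS).1 h'))
  · exact hermBlock_vecMulVec_mem_separableCone h h'

lemma mem_separableCone_of_posSemidef_ptranspose2
    {ρ : Matrix (Fin 2 × Fin 2) (Fin 2 × Fin 2) ℂ} (hρ : ρ.PosSemidef)
    (hpt : (ptranspose2 ρ).PosSemidef) : ρ ∈ separableCone (Fin 2) (Fin 2) := by
  obtain ⟨A, B, C, rfl⟩ := exists_hermBlock_eq hρ.isHermitian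
  exact hermBlock_mem_separableCone hρ (transpose_ptranspose2_hermBlock A B C ▸ hpt.transpose)

end Qubit

/-- The Peres–Horodecki PPT criterion: a two-qubit density matrix is separable if and
only if its partial transpose is positive semidefinite. -/
theorem stmt11 (ρ : Matrix (Fin 2 × Fin 2) (Fin 2 × Fin 2) ℂ) (hρ : IsDensity ρ) :
    Separable ρ ↔ (ptranspose2 ρ).PosSemidef := by
  refine ⟨Separable.posSemidef_ptranspose2, fun hpt => ?_⟩
  exact separable_of_mem_separableCone (mem_separableCone_of_posSemidef_ptranspose2 hρ.1 hpt) hρ.2
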